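/- Let i be an input-enabled transition system and t a test case for i, let σ ∈ L_{t⫿i}*, and let q_t, q_t' ∈ Q_t, q_i, q_i' ∈ Q_i. Then q_t ⫿ q_i ==σ==> q_t' ⫿ q_i' if and only if q_t ==σ↾L_t==> q_t' and q_i ==(σ[θ/δ])↾L_i^δ==> q_i'. -/

import Mathlib

/-- Labels extended with the quiescence label `δ`. -/
inductive ELabel (Lab : Type) : Type
  | lab : Lab → ELabel Lab
  | delta : ELabel Lab

namespace ELabel

/-- Membership of an extended label in `𝓛^δ = 𝓛 ∪ {δ}`. -/
def inL {Lab : Type} (Ls : Set Lab) : ELabel Lab → Prop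
  | lab ℓ => ℓ ∈ Ls
  | delta => True

end ELabel

/-- A trace lies in `(𝓛^δ)*`. -/
def TraceIn {Lab : Type} (Ls : Set Lab) (σ : List (ELabel Lab)) : Prop :=
  ∀ x ∈ σ, ELabel.inL Ls x

/-- A labelled transition system.  `T q none q'` is an internal `τ`-step,
`T q (some ℓ) q'` is a step labelled `ℓ`. -/
structure LTS (Q : Type) (Lab : Type) where
  I : Set Lab
  U : Set Lab
  T : Q → Option Lab → Q → Prop
  q0 : Q

namespace LTS

variable {Q Lab : Type}

/-- The label set `L = I ∪ U`. -/
def L (M : LTS Q Lab) : Set Lab := M.I ∪ M.U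

/-- Standing assumptions on all LTSs: countable, disjoint input/output label
sets, transitions labelled within `L`, strong convergence (no infinite
`τ`-sequences), and image-finiteness. -/
def WellFormed (M : LTS Q Lab) : Prop :=
  M.I.Countable ∧ M.U.Countable ∧ Disjoint M.I M.U ∧
  (∀ q ℓ q', M.T q (some ℓ) q' → ℓ ∈ M.L) ∧
  (¬ ∃ f : ℕ → Q, ∀ n, M.T (f n) none (f (n + 1))) ∧
  (∀ q a, {q' | M.T q a q'}.Finite)

/-- A state is quiescent if neither an output nor `τ` is enabled in it. -/
def Quiescent (M : LTS Q Lab) (q : Q) : Prop :=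
  (∀ x ∈ M.U, ∀ q', ¬ M.T q (some x) q') ∧ ∀ q', ¬ M.T q none q'

/-- A single visible step `q --x--> q'` for `x ∈ L^δ`, where the quiescence
label `δ` gives a self-loop at quiescent states. -/
def VStep (M : LTS Q Lab) (q : Q) : ELabel Lab → Q → Prop
  | .lab ℓ, q' => M.T q (some ℓ) q'
  | .delta, q' => q' = q ∧ M.Quiescent q

/-- Zero or more `τ`-steps: `q ==ε==> q'`. -/
def Eps (M : LTS Q Lab) : Q → Q → Prop :=
  Relation.ReflTransGen fun a b => M.T a none b

/-- Weak transition `q ==σ==> q'` for `σ ∈ (L^δ)*`. -/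
inductive W (M : LTS Q Lab) : Q → List (ELabel Lab) → Q → Prop
  | nil {q q' : Q} : M.Eps q q' → W M q [] q'
  | snoc {q q1 q2 q' : Q} {σ : List (ELabel Lab)} {x : ELabel Lab} :
      W M q σ q1 → M.VStep q1 x q2 → M.Eps q2 q' → W M q (σ ++ [x]) q'

/-- `X after σ`, for a set of states `X`. -/
def afterSet (M : LTS Q Lab) (X : Set Q) (σ : List (ELabel Lab)) : Set Q :=
  {q' | ∃ q ∈ X, M.W q σ q'}

/-- `M after σ`, from the initial state. -/
def after (M : LTS Q Lab) (σ : List (ELabel Lab)) : Set Q :=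
  {q' | M.W M.q0 σ q'}

/-- The predicate underlying `out(q) ⊆ U ∪ {δ}`. -/
def outLabel (M : LTS Q Lab) (q : Q) : ELabel Lab → Prop
  | .lab ℓ => ℓ ∈ M.U ∧ ∃ q', M.T q (some ℓ) q'
  | .delta => M.Quiescent q

/-- `out(q)`. -/
def outq (M : LTS Q Lab) (q : Q) : Set (ELabel Lab) :=
  {x | M.outLabel q x}

/-- `in(q) = {ℓ ∈ I | q ==ℓ==>}`. -/
def inq (M : LTS Q Lab) (q : Q) : Set Lab :=
  {ℓ | ℓ ∈ M.I ∧ ∃ q', M.W q [ELabel.lab ℓ] q'}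

/-- `out(X) = ⋃_{q ∈ X} out(q)`. -/
def outSet (M : LTS Q Lab) (X : Set Q) : Set (ELabel Lab) :=
  ⋃ q ∈ X, M.outq q

/-- `in(X) = ⋂_{q ∈ X} in(q)`. -/
def inSet (M : LTS Q Lab) (X : Set Q) : Set Lab :=
  ⋂ q ∈ X, M.inq q

/-- Input-enabledness: `M` is an IOTS. -/
def InputEnabled (M : LTS Q Lab) : Prop :=
  ∀ q, ∀ ℓ ∈ M.I, ∃ q', M.W q [ELabel.lab ℓ] q'

/-- `Utraces(M)`. -/
def Utraces (M : LTS Q Lab) : Set (List (ELabel Lab)) :=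
  {σ | TraceIn M.L σ ∧ (∃ q', M.W M.q0 σ q') ∧
    ∀ σ1 ℓ σ2, σ = σ1 ++ ELabel.lab ℓ :: σ2 → ℓ ∈ M.I →
      ∀ q, M.W M.q0 σ1 q → ∃ q', M.W q [ELabel.lab ℓ] q'}

/-- An LTS is utrace-closed when every trace over `(L^δ)*` that it can
perform is a utrace. -/
def UtraceClosed (M : LTS Q Lab) : Prop :=
  ∀ σ : List (ELabel Lab), TraceIn M.L σ → (∃ q', M.W M.q0 σ q') → σ ∈ M.Utraces

end LTS

/-- `i uioco s`. -/
def Uioco {Qi Qs Lab : Type} (i : LTS Qi Lab) (s : LTS Qs Lab) : Prop :=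
  ∀ σ ∈ s.Utraces, i.outSet (i.after σ) ⊆ s.outSet (s.after σ)

/-- Composability: disjoint output label sets. -/
def Composable {Qs Qe Lab : Type} (s : LTS Qs Lab) (e : LTS Qe Lab) : Prop :=
  s.U ∩ e.U = ∅

/-- Parallel composition `s ∥ e`. -/
def par {Qs Qe Lab : Type} (s : LTS Qs Lab) (e : LTS Qe Lab) : LTS (Qs × Qe) Lab where
  I := (s.I \ e.U) ∪ (e.I \ s.U)
  U := s.U ∪ e.U
  T := fun p a p' =>
    match a with
    | none =>
        (s.T p.1 none p'.1 ∧ p'.2 = p.2) ∨ (e.T p.2 none p'.2 ∧ p'.1 = p.1)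
    | some ℓ =>
        (ℓ ∈ s.L ∧ ℓ ∉ e.L ∧ s.T p.1 (some ℓ) p'.1 ∧ p'.2 = p.2) ∨
        (ℓ ∈ e.L ∧ ℓ ∉ s.L ∧ e.T p.2 (some ℓ) p'.2 ∧ p'.1 = p.1) ∨
        (ℓ ∈ s.L ∧ ℓ ∈ e.L ∧ s.T p.1 (some ℓ) p'.1 ∧ e.T p.2 (some ℓ) p'.2)
  q0 := (s.q0, e.q0)

/-- `s accepts e`: along utraces of `s ∥ e`, every output of `e` that is an
input of `s` is (weakly) enabled in `s`. -/
def Accepts {Qs Qe Lab : Type} (s : LTS Qs Lab) (e : LTS Qe Lab) : Prop :=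
  ∀ σ ∈ (par s e).Utraces, ∀ qs qe, (par s e).W (par s e).q0 σ (qs, qe) →
    ∀ ℓ, ELabel.lab ℓ ∈ e.outq qe → ℓ ∈ s.I → ℓ ∈ s.inq qs

/-- `s mutually accepts e`. -/
def MutuallyAccepts {Qs Qe Lab : Type} (s : LTS Qs Lab) (e : LTS Qe Lab) : Prop :=
  Accepts s e ∧ Accepts e s

/-- `R` is an ecosim for `s` and `e`. -/
def IsEcosim {Qs Qe Lab : Type} (s : LTS Qs Lab) (e : LTS Qe Lab)
    (R : Set (Set Qs × Set Qe)) : Prop :=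
  (s.after [], e.after []) ∈ R ∧
  ∀ Xs Xe, (Xs, Xe) ∈ R →
    (∀ ℓ, ELabel.lab ℓ ∈ e.outSet Xe → ℓ ∈ s.I →
      ℓ ∈ s.inSet Xs ∧
        (s.afterSet Xs [ELabel.lab ℓ], e.afterSet Xe [ELabel.lab ℓ]) ∈ R) ∧
    (∀ ℓ, ELabel.lab ℓ ∈ s.outSet Xs → ℓ ∈ e.I →
      ℓ ∈ e.inSet Xe ∧
        (s.afterSet Xs [ELabel.lab ℓ], e.afterSet Xe [ELabel.lab ℓ]) ∈ R) ∧
    (∀ ℓ, (ELabel.lab ℓ ∈ e.outSet Xe ∨ ℓ ∈ e.inSet Xe) → ℓ ∉ s.L →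
      (Xs, e.afterSet Xe [ELabel.lab ℓ]) ∈ R) ∧
    (∀ ℓ, (ELabel.lab ℓ ∈ s.outSet Xs ∨ ℓ ∈ s.inSet Xs) → ℓ ∉ e.L →
      (s.afterSet Xs [ELabel.lab ℓ], Xe) ∈ R) ∧
    (∀ ℓ, ℓ ∈ s.inSet Xs → ℓ ∈ e.inSet Xe →
      (s.afterSet Xs [ELabel.lab ℓ], e.afterSet Xe [ELabel.lab ℓ]) ∈ R) ∧
    (ELabel.delta ∈ s.outSet Xs → ELabel.delta ∈ e.outSet Xe →
      (s.afterSet Xs [ELabel.delta], e.afterSet Xe [ELabel.delta]) ∈ R)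

/-- `s eco e`: there exists an ecosim for `s` and `e`. -/
def Eco {Qs Qe Lab : Type} (s : LTS Qs Lab) (e : LTS Qe Lab) : Prop :=
  ∃ R, IsEcosim s e R

/-- `R_U(s,e)`: the smallest relation closed under the given rules. -/
inductive RU {Qs Qe Lab : Type} (s : LTS Qs Lab) (e : LTS Qe Lab) :
    Set Qs → Set Qe → Prop
  | base : RU s e (s.after []) (e.after [])
  | syncOutE {Xs : Set Qs} {Xe : Set Qe} (ℓ : Lab) :
      RU s e Xs Xe → ELabel.lab ℓ ∈ e.outSet Xe → ℓ ∈ s.I →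
      RU s e (s.afterSet Xs [ELabel.lab ℓ]) (e.afterSet Xe [ELabel.lab ℓ])
  | syncOutS {Xs : Set Qs} {Xe : Set Qe} (ℓ : Lab) :
      RU s e Xs Xe → ELabel.lab ℓ ∈ s.outSet Xs → ℓ ∈ e.I →
      RU s e (s.afterSet Xs [ELabel.lab ℓ]) (e.afterSet Xe [ELabel.lab ℓ])
  | internalE {Xs : Set Qs} {Xe : Set Qe} (ℓ : Lab) :
      RU s e Xs Xe → (ELabel.lab ℓ ∈ e.outSet Xe ∨ ℓ ∈ e.inSet Xe) → ℓ ∉ s.L →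
      RU s e Xs (e.afterSet Xe [ELabel.lab ℓ])
  | internalS {Xs : Set Qs} {Xe : Set Qe} (ℓ : Lab) :
      RU s e Xs Xe → (ELabel.lab ℓ ∈ s.outSet Xs ∨ ℓ ∈ s.inSet Xs) → ℓ ∉ e.L →
      RU s e (s.afterSet Xs [ELabel.lab ℓ]) Xe
  | syncIn {Xs : Set Qs} {Xe : Set Qe} (ℓ : Lab) :
      RU s e Xs Xe → ℓ ∈ s.inSet Xs → ℓ ∈ e.inSet Xe →
      RU s e (s.afterSet Xs [ELabel.lab ℓ]) (e.afterSet Xe [ELabel.lab ℓ])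
  | qdelta {Xs : Set Qs} {Xe : Set Qe} :
      RU s e Xs Xe → ELabel.delta ∈ s.outSet Xs → ELabel.delta ∈ e.outSet Xe →
      RU s e (s.afterSet Xs [ELabel.delta]) (e.afterSet Xe [ELabel.delta])

open Classical in
/-- Projection `σ↾𝓛^δ` of a trace onto an (extended) label set: keeps `δ`
and the labels in `Ls`, removes all other labels. -/
noncomputable def projD {Lab : Type} (σ : List (ELabel Lab)) (Ls : Set Lab) :
    List (ELabel Lab) :=
  σ.filter fun x => decide (ELabel.inL Ls x)

open Classical in
/-- Projection `σ↾𝓛` of a trace of plain labels onto a label set. -/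
noncomputable def projL {Lab : Type} (σ : List Lab) (Ls : Set Lab) : List Lab :=
  σ.filter fun ℓ => decide (ℓ ∈ Ls)

open Classical in
/-- Substitution `σ[θ/δ]` of the label `θ` by the quiescence label `δ`. -/
noncomputable def substTheta {Lab : Type} (θ : Lab) (σ : List Lab) :
    List (ELabel Lab) :=
  σ.map fun ℓ => if ℓ = θ then ELabel.delta else ELabel.lab ℓ

/-- `⟨X⟩`: componentwise collection of a set of pairs of states. -/
def collect {Qs Qe : Type} (X : Set (Qs × Qe)) : Set Qs × Set Qe :=
  (Prod.fst '' X, Prod.snd '' X)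

/-- `q_s accepts q_e over σ`. -/
def AcceptsOver {Qs Qe Lab : Type} (s : LTS Qs Lab) (e : LTS Qe Lab)
    (qs : Qs) (qe : Qe) (σ : List (ELabel Lab)) : Prop :=
  ∀ σ1 σ2 : List (ELabel Lab), σ1 ++ σ2 = σ →
    ∀ (qs' : Qs) (qe' : Qe), (par s e).W (qs, qe) σ1 (qs', qe') →
      ∀ ℓ, ELabel.lab ℓ ∈ e.outq qe' → ℓ ∈ s.I → ℓ ∈ s.inq qs' ∧ ℓ ∈ e.U

/-- `q_s mutually accepts q_e over σ`. -/
def MutuallyAcceptsOver {Qs Qe Lab : Type} (s : LTS Qs Lab) (e : LTS Qe Lab)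
    (qs : Qs) (qe : Qe) (σ : List (ELabel Lab)) : Prop :=
  AcceptsOver s e qs qe σ ∧ AcceptsOver e s qe qs σ

/-- A test case: a quasi-finite tree-shaped LTS without `τ`-transitions, with
terminal states `pass` and `fail` carrying input self-loops, a special
quiescence-observation input `θ`, at most one output transition per state,
and receptive to all inputs other than `θ`. -/
structure TestCase (Qt Lab : Type) extends LTS Qt Lab where
  passS : Qt
  failS : Qt
  theta : Lab
  theta_input : theta ∈ I
  no_tau : ∀ q q', ¬ T q none q'
  tree : ∀ q, q ≠ q0 → q ≠ passS → q ≠ failS →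
    ∃! p : Qt × Option Lab, T p.1 p.2 q
  pass_loops : ∀ ℓ ∈ I, T passS (some ℓ) passS
  pass_terminal : ∀ a q', T passS a q' → q' = passS ∧ ∃ ℓ ∈ I, a = some ℓ
  fail_loops : ∀ ℓ ∈ I, T failS (some ℓ) failS
  fail_terminal : ∀ a q', T failS a q' → q' = failS ∧ ∃ ℓ ∈ I, a = some ℓ
  one_output : ∀ q ℓ ℓ' q' q'', ℓ ∈ U → ℓ' ∈ U →
    T q (some ℓ) q' → T q (some ℓ') q'' → ℓ = ℓ' ∧ q' = q''
  receptive : ∀ q, ∀ ℓ ∈ I, ℓ ≠ theta → ∃ q', T q (some ℓ) q'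

/-- Test execution `t ⫿ i` of a test case `t` with an implementation `i`. -/
def testExec {Qt Qi Lab : Type} (t : TestCase Qt Lab) (i : LTS Qi Lab) :
    LTS (Qt × Qi) Lab where
  I := ∅
  U := i.U ∪ (t.toLTS.L \ {t.theta})
  T := fun p a p' =>
    match a with
    | none => i.T p.2 none p'.2 ∧ p'.1 = p.1
    | some ℓ =>
        (ℓ ∈ i.L ∧ ℓ ∉ t.toLTS.L ∧ i.T p.2 (some ℓ) p'.2 ∧ p'.1 = p.1) ∨
        (ℓ ∈ t.toLTS.L ∧ ℓ ∉ i.L ∧ ℓ ≠ t.theta ∧ t.T p.1 (some ℓ) p'.1 ∧ p'.2 = p.2) ∨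
        (ℓ ∈ i.L ∧ ℓ ∈ t.toLTS.L ∧ t.T p.1 (some ℓ) p'.1 ∧ i.T p.2 (some ℓ) p'.2) ∨
        (ℓ = t.theta ∧ t.T p.1 (some ℓ) p'.1 ∧ p'.2 = p.2 ∧ i.Quiescent p.2)
  q0 := (t.q0, i.q0)

/-!
A weak transition over `σ` is built one label at a time, and each component of `t ⫿ i` sees at most
one label per label of `σ`: `t` sees the labels of `L_t`, and `i` sees the labels of `L_i`, with `θ`
replaced by `δ`. Both projections are thus `List.filterMap`s along `σ`. A single step of `t ⫿ i` is
exactly a pair of component steps, where a component that does not see the label stays put, and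
`τ`-closure is componentwise as well; a product of this kind has componentwise weak transitions.
-/

theorem filterMap_append_singleton {α β : Type*} (f : α → Option β) (l : List α) (a : α) :
    (l ++ [a]).filterMap f = l.filterMap f ++ (f a).toList := by
  cases h : f a <;> simp [h]

namespace LTS

variable {Q Q₁ Q₂ Lab Lab₁ Lab₂ : Type}

/-- A step labelled by an optional visible label. Here `none` means that the system does not take
part and stays where it is, unlike in `LTS.T`, where `none` is a `τ`-step. -/
def OptStep (M : LTS Q Lab) (q : Q) : Option (ELabel Lab) → Q → Prop
  | none, q' => q' = q
  | some x, q' => M.VStep q x q'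

section WeakTransition

variable {M : LTS Q Lab} {q q' : Q} {σ : List (ELabel Lab)}

theorem w_nil_iff : M.W q [] q' ↔ M.Eps q q' := by
  refine ⟨fun h => ?_, W.nil⟩
  generalize hρ : ([] : List (ELabel Lab)) = ρ at h
  cases h with
  | nil hε => exact hε
  | snoc => simp at hρ

theorem w_append_singleton_iff {x : ELabel Lab} :
    M.W q (σ ++ [x]) q' ↔ ∃ q₁ q₂, M.W q σ q₁ ∧ M.VStep q₁ x q₂ ∧ M.Eps q₂ q' := by
  refine ⟨fun h => ?_, fun ⟨_, _, hσ, hx, hε⟩ => hσ.snoc hx hε⟩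
  generalize hρ : σ ++ [x] = ρ at h
  cases h with
  | nil => simp at hρ
  | snoc hσ hx hε =>
    obtain ⟨rfl, rfl⟩ := List.append_singleton_inj.1 hρ
    exact ⟨_, _, hσ, hx, hε⟩

theorem W.trans_eps {q₁ : Q} (h : M.W q σ q₁) (hε : M.Eps q₁ q') : M.W q σ q' := by
  cases h with
  | nil hε₀ => exact .nil (hε₀.trans hε)
  | snoc hσ hx hε₀ => exact .snoc hσ hx (hε₀.trans hε)

theorem w_append_toList_iff {o : Option (ELabel Lab)} :
    M.W q (σ ++ o.toList) q' ↔ ∃ q₁ q₂, M.W q σ q₁ ∧ M.OptStep q₁ o q₂ ∧ M.Eps q₂ q' := by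
  cases o with
  | some x => exact w_append_singleton_iff
  | none =>
    rw [Option.toList_none, List.append_nil]
    refine ⟨fun h => ⟨q', q', h, rfl, .refl⟩, ?_⟩
    rintro ⟨q₁, _, hσ, rfl, hε⟩
    exact hσ.trans_eps hε

end WeakTransition

theorem w_map_lab_iff_of_componentwise {M : LTS (Q₁ × Q₂) Lab} {M₁ : LTS Q₁ Lab₁}
    {M₂ : LTS Q₂ Lab₂} {f₁ : Lab → Option (ELabel Lab₁)} {f₂ : Lab → Option (ELabel Lab₂)}
    {σ : List Lab} {p p' : Q₁ × Q₂}
    (hε : ∀ p p', M.Eps p p' ↔ M₁.Eps p.1 p'.1 ∧ M₂.Eps p.2 p'.2)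
    (hT : ∀ ℓ ∈ σ, ∀ p p',
      M.T p (some ℓ) p' ↔ M₁.OptStep p.1 (f₁ ℓ) p'.1 ∧ M₂.OptStep p.2 (f₂ ℓ) p'.2) :
    M.W p (σ.map ELabel.lab) p' ↔
      M₁.W p.1 (σ.filterMap f₁) p'.1 ∧ M₂.W p.2 (σ.filterMap f₂) p'.2 := by
  induction σ using List.reverseRecOn generalizing p' with
  | nil => simp only [List.map_nil, List.filterMap_nil, w_nil_iff, hε]
  | append_singleton σ ℓ ih =>
    have hσ {r : Q₁ × Q₂} := ih (p' := r) fun k hk => hT k (List.mem_append_left _ hk)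
    have hℓ (r r' : Q₁ × Q₂) : M.VStep r (.lab ℓ) r' ↔ _ := hT ℓ (by simp) r r'
    rw [List.map_append, List.map_singleton, w_append_singleton_iff,
      filterMap_append_singleton, filterMap_append_singleton, w_append_toList_iff,
      w_append_toList_iff]
    simp only [hσ, hℓ, hε]
    constructor
    · rintro ⟨r, r', ⟨hr₁, hr₂⟩, ⟨hs₁, hs₂⟩, he₁, he₂⟩
      exact ⟨⟨r.1, r'.1, hr₁, hs₁, he₁⟩, r.2, r'.2, hr₂, hs₂, he₂⟩
    · rintro ⟨⟨r₁, r₁', hr₁, hs₁, he₁⟩, r₂, r₂', hr₂, hs₂, he₂⟩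
      exact ⟨(r₁, r₂), (r₁', r₂'), ⟨hr₁, hr₂⟩, ⟨hs₁, hs₂⟩, he₁, he₂⟩

end LTS

section Projection

variable {Lab : Type}

open Classical in
/-- What a system with label set `Ls` sees of a label; the projection `σ↾Ls` collects these
along `σ`. -/
noncomputable def visibleLabel (Ls : Set Lab) (ℓ : Lab) : Option (ELabel Lab) :=
  if ℓ ∈ Ls then some (.lab ℓ) else none

open Classical in
/-- What a system with label set `Ls` sees of a label when `θ` stands for an observation of
quiescence; the projection `(σ[θ/δ])↾Ls^δ` collects these along `σ`. -/
noncomputable def visibleLabelDelta (θ : Lab) (Ls : Set Lab) (ℓ : Lab) : Option (ELabel Lab) :=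
  if ℓ = θ then some .delta else visibleLabel Ls ℓ

theorem map_lab_projL (σ : List Lab) (Ls : Set Lab) :
    (projL σ Ls).map ELabel.lab = σ.filterMap (visibleLabel Ls) := by
  induction σ with
  | nil => rfl
  | cons ℓ σ ih =>
    by_cases hℓ : ℓ ∈ Ls <;> simpa [projL, visibleLabel, hℓ] using ih

theorem projD_substTheta (θ : Lab) (σ : List Lab) (Ls : Set Lab) :
    projD (substTheta θ σ) Ls = σ.filterMap (visibleLabelDelta θ Ls) := by
  have inL_delta : ELabel.inL Ls .delta := trivial
  have inL_lab (ℓ : Lab) : ELabel.inL Ls (.lab ℓ) ↔ ℓ ∈ Ls := Iff.rfl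
  induction σ with
  | nil => rfl
  | cons ℓ σ ih =>
    by_cases hθ : ℓ = θ <;> by_cases hℓ : ℓ ∈ Ls <;>
      simpa [projD, substTheta, visibleLabelDelta, visibleLabel, inL_delta, inL_lab, hθ, hℓ]
        using ih

end Projection

section TestExec

variable {Qt Qi Lab : Type} {t : TestCase Qt Lab} {i : LTS Qi Lab}

theorem TestCase.eps_iff {q q' : Qt} : t.toLTS.Eps q q' ↔ q' = q :=
  Relation.reflTransGen_iff_eq fun r => t.no_tau q r

theorem testExec_eps_iff {p p' : Qt × Qi} :
    (testExec t i).Eps p p' ↔ t.toLTS.Eps p.1 p'.1 ∧ i.Eps p.2 p'.2 := by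
  rw [TestCase.eps_iff]
  constructor
  · intro h
    induction h with
    | refl => exact ⟨rfl, .refl⟩
    | tail _ hτ ih => exact ⟨hτ.2.trans ih.1, ih.2.tail hτ.1⟩
  · obtain ⟨qt, qi⟩ := p
    obtain ⟨qt', qi'⟩ := p'
    rintro ⟨rfl, hi⟩
    exact hi.lift (Prod.mk qt') fun _ _ hτ => ⟨hτ, rfl⟩

theorem testExec_T_some_iff (hθ : t.theta ∉ i.L) {ℓ : Lab} (hℓ : ℓ ∈ i.L ∪ t.toLTS.L)
    {p p' : Qt × Qi} :
    (testExec t i).T p (some ℓ) p' ↔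
      t.toLTS.OptStep p.1 (visibleLabel t.toLTS.L ℓ) p'.1 ∧
        i.OptStep p.2 (visibleLabelDelta t.theta i.L ℓ) p'.2 := by
  have hθt : t.theta ∈ t.toLTS.L := .inl t.theta_input
  simp only [testExec, visibleLabel, visibleLabelDelta]
  by_cases hℓθ : ℓ = t.theta
  · simp [LTS.OptStep, LTS.VStep, hℓθ, hθ, hθt]
  · by_cases hℓt : ℓ ∈ t.toLTS.L <;> by_cases hℓi : ℓ ∈ i.L
    · simp [LTS.OptStep, LTS.VStep, hℓθ, hℓt, hℓi]
    · simp [LTS.OptStep, LTS.VStep, hℓθ, hℓt, hℓi]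
    · simp [LTS.OptStep, LTS.VStep, hℓθ, hℓt, hℓi, and_comm]
    · exact absurd hℓ (not_or_intro hℓi hℓt)

end TestExec

theorem project_from_testexec_general {Qt Qi Lab : Type}
    (i : LTS Qi Lab) (t : TestCase Qt Lab) (htheta : t.theta ∉ i.L)
    (σ : List Lab) (hσ : ∀ ℓ ∈ σ, ℓ ∈ i.L ∪ t.toLTS.L)
    (qt qt' : Qt) (qi qi' : Qi) :
    (testExec t i).W (qt, qi) (σ.map ELabel.lab) (qt', qi') ↔
      t.toLTS.W qt ((projL σ t.toLTS.L).map ELabel.lab) qt' ∧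
        i.W qi (projD (substTheta t.theta σ) i.L) qi' := by
  rw [map_lab_projL, projD_substTheta]
  exact LTS.w_map_lab_iff_of_componentwise (fun _ _ => testExec_eps_iff)
    fun ℓ hℓ _ _ => testExec_T_some_iff htheta (hσ ℓ hℓ)

/-- for a test case `t` for an input-enabled `i` and a trace
`σ ∈ L_{t⫿i}*`:  `q_t ⫿ q_i ==σ==> q_t' ⫿ q_i'` iff
`q_t ==σ↾L_t==> q_t'` and `q_i ==(σ[θ/δ])↾L_i^δ==> q_i'`. -/
theorem project_from_testexec {Qt Qi Lab : Type}
    (i : LTS Qi Lab) (hi : i.WellFormed) (hienabled : i.InputEnabled)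
    (t : TestCase Qt Lab) (htheta : t.theta ∉ i.L)
    (σ : List Lab) (hσ : ∀ ℓ ∈ σ, ℓ ∈ i.L ∪ t.toLTS.L)
    (qt qt' : Qt) (qi qi' : Qi) :
    (testExec t i).W (qt, qi) (σ.map ELabel.lab) (qt', qi') ↔
      t.toLTS.W qt ((projL σ t.toLTS.L).map ELabel.lab) qt' ∧
        i.W qi (projD (substTheta t.theta σ) i.L) qi' :=
  project_from_testexec_general i t htheta σ hσ qt qt' qi qi'
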